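/- (Integral invariance) Let λ ∈ Λ_I⁺ (so Φ_I ⊆ Φ_{[λ]}) and β ∈ Ψ_λ⁺. Then there exists μ ∈ Λ_I⁺ with sgn(s_βλ, μ) ≠ 0 if and only if there exists μ' ∈ Λ⁺(Φ_I, Φ_{[λ]}) with sgn(s_β(λ|_{Φ_{[λ]}}), μ', Φ_I, Φ_{[λ]}) ≠ 0. In particular, if sgn(s_βλ, μ) ≠ 0, then μ' = μ|_{Φ_{[λ]}} and c(λ,μ) = c(λ|_{Φ_{[λ]}}, μ|_{Φ_{[λ]}}, Φ_I, Φ_{[λ]}). -/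

import Mathlib

open scoped RealInnerProductSpace
open Classical

noncomputable section

namespace JantzenGVM

variable {V : Type*} [NormedAddCommGroup V] [InnerProductSpace ℝ V] [FiniteDimensional ℝ V]

/-- The coroot `α^∨ = 2α/⟨α,α⟩` of a vector `α` (junk value `0` when `α = 0`). -/
def coroot (α : V) : V := (2 / ⟪α, α⟫) • α

/-- The linear functional `v ↦ ⟨v, α^∨⟩`. -/
def corootForm (α : V) : V →ₗ[ℝ] ℝ where
  toFun v := ⟪v, coroot α⟫
  map_add' x y := by simp [inner_add_left]
  map_smul' c x := by simp [inner_smul_left]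

lemma corootForm_self {α : V} (h : ⟪α, α⟫ ≠ 0) : corootForm α α = 2 := by
  simp only [corootForm, coroot, LinearMap.coe_mk, AddHom.coe_mk, real_inner_smul_right]
  field_simp

/-- The reflection `s_α` as a linear automorphism of `V` (the identity when `⟨α,α⟩ = 0`). -/
def reflV (α : V) : V ≃ₗ[ℝ] V :=
  if h : ⟪α, α⟫ = 0 then LinearEquiv.refl ℝ V
  else Module.reflection (corootForm_self h)

/-- `h* = ℂ ⊗ V`, realized as the space of real-linear functionals `V → ℂ` via the
inner product; an element `λ` pairs with a root `α` by `⟨λ, α⟩ = λ α` and with the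
coroot by `⟨λ, α^∨⟩ = λ (coroot α)`. -/
abbrev HStar (V : Type*) [NormedAddCommGroup V] [InnerProductSpace ℝ V] := V →ₗ[ℝ] ℂ

/-- The canonical embedding of `V` into `h*`. -/
def emb (α : V) : HStar V where
  toFun v := (⟪α, v⟫ : ℂ)
  map_add' x y := by simp [inner_add_right]
  map_smul' c x := by simp [inner_smul_right, Complex.real_smul]

/-- The action of a linear automorphism `w` of `V` on `h*`: `(w • λ)(v) = λ(w⁻¹ v)`. -/
def wAct (w : V ≃ₗ[ℝ] V) (l : HStar V) : HStar V := l ∘ₗ (w.symm : V →ₗ[ℝ] V)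

/-- The reflection `s_β λ = λ - ⟨λ, β^∨⟩ β` acting on `h*`. -/
def sRefl (β : V) (l : HStar V) : HStar V := l - l (coroot β) • emb β

/-- The group generated by the reflections in the elements of `Φ'`. -/
def weyl (Φ' : Set V) : Subgroup (V ≃ₗ[ℝ] V) :=
  Subgroup.closure {w | ∃ α ∈ Φ', w = reflV α}

/-- A finite, reduced, crystallographic root system spanning the Euclidean space `V`,
together with a choice of positive system and the corresponding simple system. -/
structure RootSys (V : Type*) [NormedAddCommGroup V] [InnerProductSpace ℝ V]
    [FiniteDimensional ℝ V] where
  Φ : Finset V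
  pos : Finset V
  Δ : Finset V
  ne_zero : ∀ α ∈ Φ, α ≠ (0 : V)
  span_eq_top : Submodule.span ℝ (Φ : Set V) = ⊤
  reduced : ∀ α ∈ Φ, ∀ c : ℝ, c • α ∈ Φ → c = 1 ∨ c = -1
  refl_mem : ∀ α ∈ Φ, ∀ β ∈ Φ, reflV α β ∈ Φ
  crystallographic : ∀ α ∈ Φ, ∀ β ∈ Φ, ∃ n : ℤ, ⟪β, coroot α⟫ = (n : ℝ)
  pos_subset : pos ⊆ Φ
  mem_pos_or : ∀ α ∈ Φ, α ∈ pos ∨ -α ∈ pos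
  not_both : ∀ α ∈ pos, -α ∉ pos
  simple_subset : Δ ⊆ pos
  simple_indep : LinearIndependent ℝ (fun x : {a : V // a ∈ Δ} => x.1)
  simple_gen : ∀ β ∈ pos, ∃ c : V → ℝ, (∀ α ∈ Δ, 0 ≤ c α) ∧ β = ∑ α ∈ Δ, c α • α

/-- A subsystem of the root system: a subset of `Φ` closed under its own reflections. -/
def IsSubsystem (S : RootSys V) (Φ' : Set V) : Prop :=
  Φ' ⊆ (S.Φ : Set V) ∧ ∀ α ∈ Φ', ∀ β ∈ Φ', reflV α β ∈ Φ'

/-- The length of `w`, i.e. the number of positive roots sent to negative roots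
(this equals the Coxeter length for elements of the Weyl group). -/
def len (S : RootSys V) (w : V ≃ₗ[ℝ] V) : ℕ :=
  {β ∈ (S.pos : Set V) | w β ∉ (S.pos : Set V)}.ncard

/-- `Φ_I = ℤI ∩ Φ`, the subsystem generated by a subset `I` of the simple roots. -/
def PhiI (S : RootSys V) (I : Finset V) : Set V :=
  {α ∈ (S.Φ : Set V) | α ∈ Submodule.span ℤ (I : Set V)}

/-- `z` is a positive integer. -/
def IsPosInt (z : ℂ) : Prop := ∃ n : ℤ, 0 < n ∧ z = (n : ℂ)

/-- `z` is an integer. -/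
def IsInt (z : ℂ) : Prop := ∃ n : ℤ, z = (n : ℂ)

/-- `Λ_I⁺ = {λ ∈ h* : ⟨λ, α^∨⟩ ∈ ℤ_{>0} for all α ∈ I}`. -/
def LambdaP (I : Set V) : Set (HStar V) :=
  {l | ∀ α ∈ I, IsPosInt (l (coroot α))}

/-- `Λ⁺(Φ'', Φ') = {ν ∈ ℂΦ' : ⟨ν, α^∨⟩ ∈ ℤ_{>0} for all α ∈ Φ'' ∩ Φ⁺}`. -/
def LambdaPSub (S : RootSys V) (Φ'' Φ' : Set V) : Set (HStar V) :=
  {l | l ∈ Submodule.span ℂ (emb '' Φ') ∧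
       ∀ α ∈ Φ'' ∩ (S.pos : Set V), IsPosInt (l (coroot α))}

/-- `λ` is `Φ''`-regular: `⟨λ, α⟩ ≠ 0` for all `α ∈ Φ''`. -/
def IsRegularOn (Φ'' : Set V) (l : HStar V) : Prop := ∀ α ∈ Φ'', l α ≠ 0

/-- `Ψ⁺(λ, Φ'', Φ') = {β ∈ (Φ' ∩ Φ⁺) \ Φ'' : ⟨λ, β^∨⟩ ∈ ℤ_{>0}}`. -/
def PsiP (S : RootSys V) (Φ'' Φ' : Set V) (l : HStar V) : Set V :=
  {β | β ∈ Φ' ∩ (S.pos : Set V) ∧ β ∉ Φ'' ∧ IsPosInt (l (coroot β))}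

/-- `Ψ⁺⁺(λ, Φ'', Φ') = {β ∈ Ψ⁺(λ, Φ'', Φ') : s_β λ is Φ''-regular}`. -/
def PsiPP (S : RootSys V) (Φ'' Φ' : Set V) (l : HStar V) : Set V :=
  {β ∈ PsiP S Φ'' Φ' l | ∀ α ∈ Φ'', (sRefl β l) α ≠ 0}

/-- The sign function: `sgn(λ, μ) = (-1)^{ℓ(w)}` if `λ, μ` are `Φ''`-regular and
`μ = wλ` for some `w ∈ W(Φ'')`, and `0` otherwise. -/
def sgnW (S : RootSys V) (Φ'' : Set V) (l m : HStar V) : ℤ :=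
  if h : IsRegularOn Φ'' l ∧ IsRegularOn Φ'' m ∧ ∃ w, w ∈ weyl Φ'' ∧ m = wAct w l
  then (-1) ^ len S h.2.2.choose else 0

/-- The Jantzen coefficient `c(λ, μ, Φ'', Φ') = Σ_{β ∈ Ψ⁺⁺(λ,Φ'',Φ')} sgn(s_β λ, μ)`. -/
def jc (S : RootSys V) (Φ'' Φ' : Set V) (l m : HStar V) : ℤ :=
  ∑ᶠ β ∈ PsiPP S Φ'' Φ' l, sgnW S Φ'' (sRefl β l) m

/-- The symmetrized Jantzen coefficient `c̃(λ, μ, Φ'', Φ')`. -/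
def jcSym (S : RootSys V) (Φ'' Φ' : Set V) (l m : HStar V) : ℤ :=
  jc S Φ'' Φ' l m + jc S Φ'' Φ' m l

/-- `θ(λ) = Σ_{w ∈ W_I} (-1)^{ℓ(w)} e^{wλ}` in the free `ℤ`-module on `h*`. -/
def theta (S : RootSys V) (I : Finset V) (l : HStar V) : HStar V →₀ ℤ :=
  ∑ᶠ w ∈ (weyl (PhiI S I) : Set (V ≃ₗ[ℝ] V)),
    Finsupp.single (wAct w l) ((-1) ^ len S w)

/-- `Φ_λ = {α ∈ Φ : ⟨λ, α⟩ = 0}`. -/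
def singSet (S : RootSys V) (l : HStar V) : Set V :=
  {α ∈ (S.Φ : Set V) | l α = 0}

/-- `Φ_{[λ]} = {α ∈ Φ : ⟨λ, α^∨⟩ ∈ ℤ}`. -/
def integralSet (S : RootSys V) (l : HStar V) : Set V :=
  {α ∈ (S.Φ : Set V) | IsInt (l (coroot α))}

/-- `(ℚ A) ∩ Φ`, the intersection of the rational span of `A` with `Φ`.
Taking `A = Φ_I ∪ {β}` gives `Φ_{β,1}`; taking `A = Φ_λ ∪ {β}` gives `Φ_{β,2}`. -/
def ratSpanRoots (S : RootSys V) (A : Set V) : Set V :=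
  {γ ∈ (S.Φ : Set V) | ∃ (t : Finset V) (c : V → ℚ),
    (t : Set V) ⊆ A ∧ γ = ∑ α ∈ t, (c α : ℝ) • α}

/-- `Φ_{β,0}`, the irreducible component of `Φ` containing `β`. -/
def component (S : RootSys V) (β : V) : Set V :=
  {γ ∈ (S.Φ : Set V) |
    Relation.ReflTransGen
      (fun x y => x ∈ (S.Φ : Set V) ∧ y ∈ (S.Φ : Set V) ∧ ⟪x, y⟫ ≠ 0) β γ}

/-- `λ|_{Φ'}`: the unique element of `ℂΦ'` with `⟨λ|_{Φ'}, α^∨⟩ = ⟨λ, α^∨⟩`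
for all `α ∈ Φ'`. -/
def restrictW (Φ' : Set V) (l : HStar V) : HStar V :=
  letI : Nonempty (HStar V) := ⟨0⟩
  Classical.epsilon fun m =>
    m ∈ Submodule.span ℂ (emb '' Φ') ∧ ∀ α ∈ Φ', m (coroot α) = l (coroot α)

/-- `ᴵWᴶ = {w ∈ W : ℓ(uwv) = ℓ(u) + ℓ(w) + ℓ(v) for all u ∈ W_I, v ∈ W_J}`. -/
def doubleCoset (S : RootSys V) (I J : Finset V) : Set (V ≃ₗ[ℝ] V) :=
  {w | w ∈ weyl (S.Φ : Set V) ∧ ∀ u ∈ weyl (PhiI S I), ∀ v ∈ weyl (PhiI S J),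
    len S (u * w * v) = len S u + len S w + len S v}

/-- The fundamental weight `ϖ_j` relative to an enumeration `e` of the simple roots:
the unique element of `h*` with `⟨ϖ_j, α_k^∨⟩ = δ_{jk}`. -/
def fundWeight {n : ℕ} (e : Fin n → V) (j : Fin n) : HStar V :=
  letI : Nonempty (HStar V) := ⟨0⟩
  Classical.epsilon fun m => ∀ k : Fin n, m (coroot (e k)) = if k = j then 1 else 0

/-- The labels of the irreducible Dynkin types. -/
inductive LieType | A | B | C | D | E | F | G
deriving DecidableEq

/-- The Cartan matrix of type `A_n` (1-based indices): entry `(i,j)` is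
`⟨α_i, α_j^∨⟩`. -/
def cartanA (i j : ℕ) : ℤ :=
  if i = j then 2 else if i + 1 = j ∨ j + 1 = i then -1 else 0

/-- The Cartan matrices of the irreducible types in the standard (Bourbaki/Humphreys)
numbering of the Dynkin diagram: `cartanEntry t n i j = ⟨α_i, α_j^∨⟩` (1-based). -/
def cartanEntry : LieType → ℕ → ℕ → ℕ → ℤ
  | .A, _, i, j => cartanA i j
  | .B, n, i, j => if i + 1 = n ∧ j = n then -2 else cartanA i j
  | .C, n, i, j => if i = n ∧ j + 1 = n then -2 else cartanA i j
  | .D, n, i, j =>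
      if i = j then 2
      else if (i + 2 = n ∧ j = n) ∨ (i = n ∧ j + 2 = n) then -1
      else if (i + 1 = n ∧ j = n) ∨ (i = n ∧ j + 1 = n) then 0
      else cartanA i j
  | .E, _, i, j =>
      if i = j then 2
      else if (i = 1 ∧ j = 3) ∨ (i = 3 ∧ j = 1) ∨ (i = 2 ∧ j = 4) ∨ (i = 4 ∧ j = 2) then -1
      else if (i = 1 ∧ j = 2) ∨ (i = 2 ∧ j = 1) ∨ (i = 2 ∧ j = 3) ∨ (i = 3 ∧ j = 2) then 0
      else cartanA i j
  | .F, _, i, j => if i = 2 ∧ j = 3 then -2 else cartanA i j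
  | .G, _, i, j => if i = 2 ∧ j = 1 then -3 else cartanA i j

/-- The standard basis vector `e_k` (1-based index, junk `0` outside `1 ≤ k ≤ n`). -/
def stdE (n k : ℕ) : EuclideanSpace ℝ (Fin n) :=
  if h : 1 ≤ k ∧ k ≤ n then EuclideanSpace.single ⟨k - 1, by omega⟩ 1 else 0

/-- The labels `B`, `C`, `D` of the classical non-`A` types. -/
inductive BCD | B | C | D
deriving DecidableEq

/-- The root set of `B_n` / `C_n` / `D_n` in the standard realization. -/
def bcdRoots (t : BCD) (n : ℕ) : Set (EuclideanSpace ℝ (Fin n)) :=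
  {v | (∃ i j : ℕ, 1 ≤ i ∧ i < j ∧ j ≤ n ∧
          (v = stdE n i - stdE n j ∨ v = -(stdE n i - stdE n j) ∨
           v = stdE n i + stdE n j ∨ v = -(stdE n i + stdE n j))) ∨
       (match t with
        | .B => ∃ i : ℕ, 1 ≤ i ∧ i ≤ n ∧ (v = stdE n i ∨ v = -stdE n i)
        | .C => ∃ i : ℕ, 1 ≤ i ∧ i ≤ n ∧ (v = (2:ℝ) • stdE n i ∨ v = -((2:ℝ) • stdE n i))
        | .D => False)}

/-- The positive roots of `B_n` / `C_n` / `D_n` in the standard realization. -/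
def bcdPos (t : BCD) (n : ℕ) : Set (EuclideanSpace ℝ (Fin n)) :=
  {v | (∃ i j : ℕ, 1 ≤ i ∧ i < j ∧ j ≤ n ∧
          (v = stdE n i - stdE n j ∨ v = stdE n i + stdE n j)) ∨
       (match t with
        | .B => ∃ i : ℕ, 1 ≤ i ∧ i ≤ n ∧ v = stdE n i
        | .C => ∃ i : ℕ, 1 ≤ i ∧ i ≤ n ∧ v = (2:ℝ) • stdE n i
        | .D => False)}

/-- The simple roots of `B_n` / `C_n` / `D_n` in the standard realization. -/
def bcdSimple (t : BCD) (n : ℕ) : Set (EuclideanSpace ℝ (Fin n)) :=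
  {v | (∃ i : ℕ, 1 ≤ i ∧ i < n ∧ v = stdE n i - stdE n (i + 1)) ∨
       (match t with
        | .B => v = stdE n n
        | .C => v = (2:ℝ) • stdE n n
        | .D => v = stdE n (n - 1) + stdE n n)}

/-- The simple root `α_k` of `B_n` / `C_n` / `D_n` (1-based index `k`). -/
def bcdAlpha (t : BCD) (n k : ℕ) : EuclideanSpace ℝ (Fin n) :=
  if k < n then stdE n k - stdE n (k + 1)
  else match t with
  | .B => stdE n n
  | .C => (2:ℝ) • stdE n n
  | .D => stdE n (n - 1) + stdE n n

/-! Restriction `λ ↦ λ|_P` is composition with the orthogonal projection onto `ℝP`. A reflection in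
a vector of `ℝP` commutes with this projection and acts trivially on the complement `(ℝP)ᗮ`, so
restriction is equivariant under such reflections, and a weight is determined by its restriction to
`P` together with its values on `(ℝP)ᗮ`. Hence, once `λ` and `μ` agree on `(ℝP)ᗮ`, the equation
`μ = w s_β λ` can be tested after restriction, and a solution `ν = w s_β (λ|_P)` lifts to
`μ = w s_β λ`. For `P = Φ_{[λ]}` this needs `Φ_I ⊆ Φ_{[λ]}`, which holds because the coroots of the
positive roots of `Φ_I` are nonnegative integral combinations of the simple coroots of `I`. -/

section Reflection

omit [FiniteDimensional ℝ V] in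
lemma coroot_neg (α : V) : coroot (-α) = -coroot α := by
  simp [coroot]

omit [FiniteDimensional ℝ V] in
lemma coroot_mem {U : Submodule ℝ V} {α : V} (hα : α ∈ U) : coroot α ∈ U :=
  U.smul_mem _ hα

lemma reflV_apply (α v : V) : reflV α v = v - ⟪v, coroot α⟫ • α := by
  unfold reflV
  split_ifs with h
  · simp [inner_self_eq_zero.1 h]
  · simp [Module.reflection_apply, corootForm]

lemma inner_reflV_self (α v : V) : ⟪reflV α v, reflV α v⟫ = ⟪v, v⟫ := by
  rcases eq_or_ne α 0 with rfl | hα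
  · simp [reflV_apply]
  · have hαα : ⟪α, α⟫ ≠ 0 := inner_self_ne_zero.2 hα
    simp only [reflV_apply, coroot, inner_sub_left, inner_sub_right, real_inner_smul_left,
      real_inner_smul_right, real_inner_comm v α]
    field_simp
    ring

lemma coroot_reflV (α γ : V) :
    coroot (reflV α γ) = coroot γ - ⟪α, coroot γ⟫ • coroot α := by
  rw [coroot, inner_reflV_self, reflV_apply, smul_sub]
  simp only [coroot, smul_smul, real_inner_smul_right, real_inner_comm α γ]
  ring_nf

end Reflection

section SimpleRoots

namespace RootSys

variable (S : RootSys V)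

lemma span_simple : Submodule.span ℝ (S.Δ : Set V) = ⊤ := by
  have hpos : ∀ β ∈ S.pos, β ∈ Submodule.span ℝ (S.Δ : Set V) := by
    intro β hβ
    obtain ⟨c, -, rfl⟩ := S.simple_gen β hβ
    exact sum_mem fun α hα => Submodule.smul_mem _ _ (Submodule.subset_span hα)
  rw [eq_top_iff, ← S.span_eq_top, Submodule.span_le]
  intro α hα
  rcases S.mem_pos_or α hα with h | h
  · exact hpos α h
  · exact (Submodule.neg_mem_iff _).1 (hpos _ h)

/-- The basis of `V` formed by the simple roots, which provides the simple-root coordinates. -/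
def simpleBasis : Module.Basis {α // α ∈ S.Δ} ℝ V :=
  .mk S.simple_indep (by simpa using S.span_simple.ge)

/-- The height of a vector, i.e. the sum of its simple-root coordinates, as a linear form. -/
def height : V →ₗ[ℝ] ℝ := S.simpleBasis.constr ℝ fun _ => (1 : ℝ)

variable {S}

lemma simpleBasis_apply (α : {α // α ∈ S.Δ}) : S.simpleBasis α = α.1 :=
  Module.Basis.mk_apply _ _ α

lemma height_simple {α : V} (hα : α ∈ S.Δ) : S.height α = 1 := by
  have hconstr := S.simpleBasis.constr_basis ℝ (fun _ => (1 : ℝ)) ⟨α, hα⟩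
  rwa [simpleBasis_apply] at hconstr

lemma simpleBasis_repr_simple {α : V} (hα : α ∈ S.Δ) :
    S.simpleBasis.repr α = Finsupp.single ⟨α, hα⟩ 1 := by
  rw [← S.simpleBasis.repr_self, simpleBasis_apply]

lemma sum_simpleBasis_repr_smul (v : V) :
    ∑ δ : {α // α ∈ S.Δ}, S.simpleBasis.repr v δ • δ.1 = v := by
  simpa only [simpleBasis_apply] using S.simpleBasis.sum_repr v

lemma simpleBasis_repr_nonneg {β : V} (hβ : β ∈ S.pos) (δ : {α // α ∈ S.Δ}) :
    0 ≤ S.simpleBasis.repr β δ := by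
  obtain ⟨c, hc, hsum⟩ := S.simple_gen β hβ
  have hβc : β = ∑ α : {α // α ∈ S.Δ}, c α.1 • S.simpleBasis α := by
    simp only [simpleBasis_apply, hsum]
    exact (Finset.sum_coe_sort S.Δ fun α => c α • α).symm
  rw [hβc, Module.Basis.repr_sum_self]
  exact hc δ δ.2

lemma mem_pos_of_simpleBasis_repr_pos {γ : V} (hγ : γ ∈ S.Φ) {δ : {α // α ∈ S.Δ}}
    (hδ : 0 < S.simpleBasis.repr γ δ) : γ ∈ S.pos := by
  refine (S.mem_pos_or γ hγ).resolve_right fun hneg => ?_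
  have := simpleBasis_repr_nonneg hneg δ
  simp only [map_neg, Finsupp.neg_apply] at this
  linarith

lemma exists_simpleBasis_repr_pos {α γ : V} (hα : α ∈ S.Δ) (hγ : γ ∈ S.pos) (hne : γ ≠ α) :
    ∃ δ : {α // α ∈ S.Δ}, δ.1 ≠ α ∧ 0 < S.simpleBasis.repr γ δ := by
  by_contra! hle
  have hγα : γ = S.simpleBasis.repr γ ⟨α, hα⟩ • α := by
    conv_lhs => rw [← S.sum_simpleBasis_repr_smul γ]
    refine Finset.sum_eq_single _ (fun δ _ hδ => ?_) (by simp)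
    have hrepr : S.simpleBasis.repr γ δ = 0 :=
      (hle δ fun h => hδ (Subtype.ext h)).antisymm (simpleBasis_repr_nonneg hγ δ)
    rw [hrepr, zero_smul]
  rcases S.reduced α (S.pos_subset (S.simple_subset hα)) _ (hγα ▸ S.pos_subset hγ) with h | h
  · exact hne (by rw [hγα, h, one_smul])
  · linarith [simpleBasis_repr_nonneg hγ ⟨α, hα⟩]

lemma reflV_mem_pos {α γ : V} (hα : α ∈ S.Δ) (hγ : γ ∈ S.pos) (hne : γ ≠ α) :
    reflV α γ ∈ S.pos := by
  obtain ⟨δ, hδα, hδ⟩ := exists_simpleBasis_repr_pos hα hγ hne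
  refine mem_pos_of_simpleBasis_repr_pos (δ := δ)
    (S.refl_mem α (S.pos_subset (S.simple_subset hα)) γ (S.pos_subset hγ)) ?_
  have hcoord : S.simpleBasis.repr α δ = 0 := by
    rw [simpleBasis_repr_simple hα, Finsupp.single_eq_of_ne fun h => hδα (congrArg Subtype.val h)]
  simpa [reflV_apply, hcoord] using hδ

end RootSys

variable {S : RootSys V} {I : Finset V}

lemma simpleBasis_repr_eq_zero_of_mem_span (hI : I ⊆ S.Δ) {γ : V}
    (hγ : γ ∈ Submodule.span ℤ (I : Set V)) {δ : {α // α ∈ S.Δ}} (hδ : δ.1 ∉ I) :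
    S.simpleBasis.repr γ δ = 0 := by
  induction hγ using Submodule.span_induction with
  | mem α hα =>
    rw [RootSys.simpleBasis_repr_simple (hI hα),
      Finsupp.single_eq_of_ne fun h => hδ (by rwa [h])]
  | zero => simp
  | add x y _ _ hx hy => simp [hx, hy]
  | smul n x _ hx => simp [hx]

lemma exists_mem_inner_pos (hI : I ⊆ S.Δ) {γ : V} (hγ : γ ∈ PhiI S I) (hpos : γ ∈ S.pos) :
    ∃ α ∈ I, 0 < ⟪γ, α⟫ := by
  by_contra! hle
  have hterm (δ : {α // α ∈ S.Δ}) : S.simpleBasis.repr γ δ * ⟪γ, δ.1⟫ ≤ 0 := by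
    by_cases hδ : δ.1 ∈ I
    · exact mul_nonpos_of_nonneg_of_nonpos (RootSys.simpleBasis_repr_nonneg hpos δ) (hle _ hδ)
    · rw [simpleBasis_repr_eq_zero_of_mem_span hI hγ.2 hδ, zero_mul]
  have hself : ⟪γ, γ⟫ ≤ 0 := calc
    ⟪γ, γ⟫ = ⟪γ, ∑ δ : {α // α ∈ S.Δ}, S.simpleBasis.repr γ δ • δ.1⟫ := by
      rw [RootSys.sum_simpleBasis_repr_smul]
    _ = ∑ δ : {α // α ∈ S.Δ}, S.simpleBasis.repr γ δ * ⟪γ, δ.1⟫ := by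
      simp only [inner_sum, real_inner_smul_right]
    _ ≤ 0 := Finset.sum_nonpos fun δ _ => hterm δ
  exact hself.not_gt (real_inner_self_pos.2 (S.ne_zero γ hγ.1))

lemma mem_phiI (hI : I ⊆ S.Δ) {α : V} (hα : α ∈ I) : α ∈ PhiI S I :=
  ⟨S.pos_subset (S.simple_subset (hI hα)), Submodule.subset_span hα⟩

lemma neg_mem_phiI {γ : V} (hγ : γ ∈ PhiI S I) (hneg : -γ ∈ S.Φ) : -γ ∈ PhiI S I :=
  ⟨hneg, Submodule.neg_mem _ hγ.2⟩

lemma reflV_mem_phiI {α γ : V} (hα : α ∈ PhiI S I) (hγ : γ ∈ PhiI S I) :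
    reflV α γ ∈ PhiI S I := by
  refine ⟨S.refl_mem α hα.1 γ hγ.1, ?_⟩
  obtain ⟨n, hn⟩ := S.crystallographic α hα.1 γ hγ.1
  rw [reflV_apply, hn, Int.cast_smul_eq_zsmul]
  exact Submodule.sub_mem _ hγ.2 (Submodule.smul_mem _ _ hα.2)

lemma phiI_pos_induction (hI : I ⊆ S.Δ) {p : V → Prop} (simple : ∀ α ∈ I, p α)
    (refl : ∀ α ∈ I, ∀ γ ∈ PhiI S I, 0 < ⟪γ, α⟫ → p (reflV α γ) → p γ)
    {γ : V} (hγ : γ ∈ PhiI S I) (hpos : γ ∈ S.pos) : p γ := by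
  by_contra hγp
  obtain ⟨δ, hδ, hmin⟩ := Finset.exists_min_image {δ ∈ S.pos | δ ∈ PhiI S I ∧ ¬ p δ} S.height
    ⟨γ, Finset.mem_filter.2 ⟨hpos, hγ, hγp⟩⟩
  obtain ⟨hδpos, hδI, hδp⟩ := Finset.mem_filter.1 hδ
  obtain ⟨α, hαI, hinner⟩ := exists_mem_inner_pos hI hδI hδpos
  have hne : δ ≠ α := fun h => hδp (h ▸ simple α hαI)
  have hheight : S.height (reflV α δ) < S.height δ := by
    have hαα : 0 < ⟪α, α⟫ := real_inner_self_pos.2 (S.ne_zero α (mem_phiI hI hαI).1)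
    have hcoroot : 0 < ⟪δ, coroot α⟫ := by
      rw [coroot, real_inner_smul_right]
      positivity
    simpa [reflV_apply, RootSys.height_simple (hI hαI)] using hcoroot
  have hmem : reflV α δ ∈ ({δ ∈ S.pos | δ ∈ PhiI S I ∧ ¬ p δ} : Finset V) :=
    Finset.mem_filter.2 ⟨RootSys.reflV_mem_pos (hI hαI) hδpos hne,
      reflV_mem_phiI (mem_phiI hI hαI) hδI, fun h => hδp (refl α hαI δ hδI hinner h)⟩
  exact (hmin _ hmem).not_gt hheight

lemma isPosInt_apply_coroot (hI : I ⊆ S.Δ) {l : HStar V} (hl : l ∈ LambdaP (I : Set V))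
    {γ : V} (hγ : γ ∈ PhiI S I) (hpos : γ ∈ S.pos) : IsPosInt (l (coroot γ)) := by
  refine phiI_pos_induction (p := fun γ => IsPosInt (l (coroot γ))) hI hl ?_ hγ hpos
  rintro α hα γ hγ hinner ⟨a, ha, hla⟩
  obtain ⟨b, hb, hlb⟩ := hl α hα
  obtain ⟨m, hm⟩ := S.crystallographic γ hγ.1 α (mem_phiI hI hα).1
  have hmpos : 0 < m := by
    have hγγ : 0 < ⟪γ, γ⟫ := real_inner_self_pos.2 (S.ne_zero γ hγ.1)
    have : (0 : ℝ) < m := by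
      rw [← hm, coroot, real_inner_smul_right, real_inner_comm γ α]
      positivity
    exact_mod_cast this
  rw [coroot_reflV, hm, map_sub, map_smul, sub_eq_iff_eq_add, hlb] at hla
  exact ⟨a + m * b, add_pos ha (mul_pos hmpos hb), by simp [hla]⟩

lemma phiI_subset_integralSet (hI : I ⊆ S.Δ) {l : HStar V} (hl : l ∈ LambdaP (I : Set V)) :
    PhiI S I ⊆ integralSet S l := by
  intro γ hγ
  refine ⟨hγ.1, ?_⟩
  rcases S.mem_pos_or γ hγ.1 with hpos | hneg
  · obtain ⟨n, -, hn⟩ := isPosInt_apply_coroot hI hl hγ hpos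
    exact ⟨n, hn⟩
  · obtain ⟨n, -, hn⟩ := isPosInt_apply_coroot hI hl (neg_mem_phiI hγ (S.pos_subset hneg)) hneg
    refine ⟨-n, ?_⟩
    rw [Int.cast_neg, ← hn, coroot_neg, map_neg, neg_neg]

lemma psiP_subset_integralSet (Q : Set V) (l : HStar V) :
    PsiP S Q (S.Φ : Set V) l ⊆ integralSet S l := by
  rintro γ ⟨⟨hγ, -⟩, -, n, -, hn⟩
  exact ⟨hγ, n, hn⟩

end SimpleRoots

section Restriction

omit [FiniteDimensional ℝ V] in
lemma isLinearMap_emb : IsLinearMap ℝ (emb : V → HStar V) where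
  map_add x y := by ext v; simp [emb, inner_add_left]
  map_smul c x := by ext v; simp [emb, real_inner_smul_left]

omit [FiniteDimensional ℝ V] in
lemma emb_mem_span {P : Set V} {a : V} (ha : a ∈ Submodule.span ℝ P) :
    emb a ∈ Submodule.span ℂ (emb '' P) := by
  have hemb : emb a ∈ Submodule.span ℝ (emb '' P) := by
    have hmap : isLinearMap_emb.mk' emb a ∈ Submodule.span ℝ (isLinearMap_emb.mk' emb '' P) := by
      rw [Submodule.span_image]
      exact Submodule.mem_map_of_mem ha
    exact hmap
  exact Submodule.span_subset_span ℝ ℂ _ hemb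

lemma exists_eq_emb_add_I_smul_emb (l : HStar V) :
    ∃ a b : V, l = emb a + Complex.I • emb b := by
  have riesz (g : V →ₗ[ℝ] ℝ) : ∃ a : V, ∀ v, ⟪a, v⟫ = g v :=
    ⟨(InnerProductSpace.toDual ℝ V).symm (LinearMap.toContinuousLinearMap g), by simp⟩
  obtain ⟨a, ha⟩ := riesz (Complex.reLm ∘ₗ l)
  obtain ⟨b, hb⟩ := riesz (Complex.imLm ∘ₗ l)
  refine ⟨a, b, LinearMap.ext fun v => Complex.ext ?_ ?_⟩
  · simp [emb, ha]
  · simp [emb, hb]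

lemma emb_comp_starProjection (U : Submodule ℝ V) (a : V) :
    emb a ∘ₗ (U.starProjection : V →ₗ[ℝ] V) = emb (U.starProjection a) := by
  ext v
  simp [emb, Submodule.inner_starProjection_left_eq_right]

lemma comp_starProjection_mem_span_emb (P : Set V) (l : HStar V) :
    l ∘ₗ ((Submodule.span ℝ P).starProjection : V →ₗ[ℝ] V) ∈ Submodule.span ℂ (emb '' P) := by
  obtain ⟨a, b, rfl⟩ := exists_eq_emb_add_I_smul_emb l
  rw [LinearMap.add_comp, LinearMap.smul_comp, emb_comp_starProjection, emb_comp_starProjection]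
  exact Submodule.add_mem _ (emb_mem_span (Submodule.starProjection_apply_mem _ a))
    (Submodule.smul_mem _ _ (emb_mem_span (Submodule.starProjection_apply_mem _ b)))

omit [FiniteDimensional ℝ V] in
lemma apply_eq_zero_of_mem_orthogonal {P : Set V} {m : HStar V}
    (hm : m ∈ Submodule.span ℂ (emb '' P)) {v : V} (hv : v ∈ (Submodule.span ℝ P)ᗮ) :
    m v = 0 := by
  induction hm using Submodule.span_induction with
  | mem x hx =>
    obtain ⟨α, hα, rfl⟩ := hx
    simp [emb, (Submodule.mem_orthogonal _ _).1 hv α (Submodule.subset_span hα)]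
  | zero => simp
  | add x y _ _ hx hy => simp [hx, hy]
  | smul a x _ hx => simp [hx]

omit [FiniteDimensional ℝ V] in
lemma eqOn_span_of_apply_coroot_eq {P : Set V} {l m : HStar V}
    (h : ∀ α ∈ P, l (coroot α) = m (coroot α)) :
    Set.EqOn l m (Submodule.span ℝ P) := by
  refine LinearMap.eqOn_span' fun α hα => ?_
  rcases eq_or_ne α 0 with rfl | h0
  · simp
  · have hαα : ⟪α, α⟫ ≠ 0 := inner_self_ne_zero.2 h0
    have hc : α = (⟪α, α⟫ / 2) • coroot α := by
      rw [coroot, smul_smul, div_mul_div_cancel₀ two_ne_zero, div_self hαα, one_smul]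
    rw [hc, map_smul, map_smul, h α hα]

lemma ext_of_eqOn_orthogonal {U : Submodule ℝ V} {l m : HStar V} (h : Set.EqOn l m U)
    (hperp : Set.EqOn l m Uᗮ) : l = m := by
  ext v
  obtain ⟨y, hy, z, hz, rfl⟩ := U.exists_add_mem_mem_orthogonal v
  rw [map_add, map_add, h hy, hperp hz]

lemma restrictW_spec (P : Set V) (l : HStar V) :
    restrictW P l ∈ Submodule.span ℂ (emb '' P) ∧
      ∀ α ∈ P, restrictW P l (coroot α) = l (coroot α) := by
  have hexists : ∃ m : HStar V,
      m ∈ Submodule.span ℂ (emb '' P) ∧ ∀ α ∈ P, m (coroot α) = l (coroot α) := by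
    refine ⟨_, comp_starProjection_mem_span_emb P l, fun α hα => ?_⟩
    have hc : coroot α ∈ Submodule.span ℝ P := coroot_mem (Submodule.subset_span hα)
    simp [Submodule.starProjection_eq_self_iff.2 hc]
  exact Classical.epsilon_spec hexists

variable {P : Set V}

lemma restrictW_apply_of_mem_span (l : HStar V) {v : V} (hv : v ∈ Submodule.span ℝ P) :
    restrictW P l v = l v :=
  eqOn_span_of_apply_coroot_eq (restrictW_spec P l).2 hv

lemma restrictW_eq_comp_starProjection (P : Set V) (l : HStar V) :
    restrictW P l = l ∘ₗ ((Submodule.span ℝ P).starProjection : V →ₗ[ℝ] V) := by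
  refine ext_of_eqOn_orthogonal (U := Submodule.span ℝ P) (fun v hv => ?_) fun v hv => ?_
  · simp [restrictW_apply_of_mem_span l hv, Submodule.starProjection_eq_self_iff.2 hv]
  · rw [apply_eq_zero_of_mem_orthogonal (restrictW_spec P l).1 hv,
      apply_eq_zero_of_mem_orthogonal (comp_starProjection_mem_span_emb P l) hv]

lemma restrictW_apply (P : Set V) (l : HStar V) (v : V) :
    restrictW P l v = l ((Submodule.span ℝ P).starProjection v) := by
  rw [restrictW_eq_comp_starProjection]
  rfl

lemma eq_of_restrictW_eq {l m : HStar V} (h : restrictW P l = restrictW P m)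
    (hperp : Set.EqOn l m (Submodule.span ℝ P)ᗮ) : l = m := by
  refine ext_of_eqOn_orthogonal (fun v hv => ?_) hperp
  rw [← restrictW_apply_of_mem_span l hv, h, restrictW_apply_of_mem_span m hv]

end Restriction

section Equivariance

variable {P Q : Set V} {U : Submodule ℝ V}

omit [FiniteDimensional ℝ V] in
lemma sRefl_apply_of_mem_orthogonal {β : V} (hβ : β ∈ U) (l : HStar V) {v : V} (hv : v ∈ Uᗮ) :
    sRefl β l v = l v := by
  simp [sRefl, emb, (Submodule.mem_orthogonal _ _).1 hv β hβ]

lemma weyl_le_fixingSubgroup_orthogonal (hQ : Q ⊆ U) :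
    weyl Q ≤ fixingSubgroup (V ≃ₗ[ℝ] V) (Uᗮ : Set V) := by
  refine (Subgroup.closure_le _).2 ?_
  rintro _ ⟨α, hα, rfl⟩
  refine (mem_fixingSubgroup_iff _).2 fun v hv => ?_
  rw [LinearEquiv.smul_def, reflV_apply,
    (Submodule.mem_orthogonal' _ _).1 hv _ (coroot_mem (hQ hα)), zero_smul, sub_zero]

lemma starProjection_weyl_apply (hQ : Q ⊆ U) {w : V ≃ₗ[ℝ] V} (hw : w ∈ weyl Q) (v : V) :
    U.starProjection (w v) = w (U.starProjection v) := by
  induction hw using Subgroup.closure_induction generalizing v with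
  | mem w hw =>
    obtain ⟨α, hα, rfl⟩ := hw
    have hinner : ⟪U.starProjection v, coroot α⟫ = ⟪v, coroot α⟫ := by
      rw [Submodule.inner_starProjection_left_eq_right,
        Submodule.starProjection_eq_self_iff.2 (coroot_mem (hQ hα))]
    rw [reflV_apply, reflV_apply, map_sub, map_smul, hinner,
      Submodule.starProjection_eq_self_iff.2 (hQ hα)]
  | one => rfl
  | mul x y _ _ hx hy => rw [LinearEquiv.mul_apply, hx, hy, LinearEquiv.mul_apply]
  | inv x _ hx =>
    have hinv (u : V) : x (x⁻¹ u) = u := x.apply_symm_apply u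
    apply x.injective
    rw [← hx, hinv, hinv]

lemma wAct_apply_of_mem_orthogonal (hQ : Q ⊆ U) {w : V ≃ₗ[ℝ] V} (hw : w ∈ weyl Q)
    (l : HStar V) {v : V} (hv : v ∈ Uᗮ) : wAct w l v = l v :=
  congrArg l ((mem_fixingSubgroup_iff _).1
    (weyl_le_fixingSubgroup_orthogonal hQ ((weyl Q).inv_mem hw)) v hv)

lemma restrictW_wAct (hQ : Q ⊆ Submodule.span ℝ P) {w : V ≃ₗ[ℝ] V} (hw : w ∈ weyl Q)
    (l : HStar V) : restrictW P (wAct w l) = wAct w (restrictW P l) := by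
  ext v
  have hcomm := starProjection_weyl_apply hQ ((weyl Q).inv_mem hw) v
  rw [restrictW_apply]
  exact (congrArg l hcomm.symm).trans (restrictW_apply P l _).symm

lemma restrictW_sRefl {β : V} (hβ : β ∈ Submodule.span ℝ P) (l : HStar V) :
    restrictW P (sRefl β l) = sRefl β (restrictW P l) := by
  have hemb (v : V) : emb β ((Submodule.span ℝ P).starProjection v) = emb β v := by
    simp [emb, ← Submodule.inner_starProjection_left_eq_right,
      Submodule.starProjection_eq_self_iff.2 hβ]
  ext v
  simp [restrictW_apply, sRefl, hemb, Submodule.starProjection_eq_self_iff.2 (coroot_mem hβ)]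

end Equivariance

section Sign

variable {S : RootSys V} {P Q : Set V}

lemma sgnW_ne_zero_iff {l m : HStar V} :
    sgnW S Q l m ≠ 0 ↔
      IsRegularOn Q l ∧ IsRegularOn Q m ∧ ∃ w, w ∈ weyl Q ∧ m = wAct w l := by
  unfold sgnW
  split_ifs with h
  · simp [h]
  · simp [h]

lemma isRegularOn_restrictW_iff (hQ : Q ⊆ Submodule.span ℝ P) {l : HStar V} :
    IsRegularOn Q (restrictW P l) ↔ IsRegularOn Q l :=
  forall₂_congr fun α hα => by rw [restrictW_apply_of_mem_span l (hQ hα)]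

lemma restrictW_eq_wAct_restrictW_iff (hQ : Q ⊆ Submodule.span ℝ P) {l m : HStar V}
    (hperp : Set.EqOn l m (Submodule.span ℝ P)ᗮ) {w : V ≃ₗ[ℝ] V} (hw : w ∈ weyl Q) :
    restrictW P m = wAct w (restrictW P l) ↔ m = wAct w l := by
  rw [← restrictW_wAct hQ hw]
  refine ⟨fun h => eq_of_restrictW_eq h fun v hv => ?_, congrArg _⟩
  exact (hperp hv).symm.trans (wAct_apply_of_mem_orthogonal hQ hw l hv).symm

lemma sgnW_restrictW (hQ : Q ⊆ Submodule.span ℝ P) {l m : HStar V}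
    (hperp : Set.EqOn l m (Submodule.span ℝ P)ᗮ) :
    sgnW S Q (restrictW P l) (restrictW P m) = sgnW S Q l m := by
  have hw : (fun w => w ∈ weyl Q ∧ restrictW P m = wAct w (restrictW P l)) =
      fun w => w ∈ weyl Q ∧ m = wAct w l :=
    funext fun w => propext (and_congr_right (restrictW_eq_wAct_restrictW_iff hQ hperp))
  simp only [sgnW, isRegularOn_restrictW_iff hQ, hw]

lemma eqOn_orthogonal_of_sgnW_ne_zero {U : Submodule ℝ V} (hQ : Q ⊆ U) {l m : HStar V}
    (h : sgnW S Q l m ≠ 0) : Set.EqOn l m Uᗮ := by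
  obtain ⟨-, -, w, hw, rfl⟩ := sgnW_ne_zero_iff.1 h
  exact fun v hv => (wAct_apply_of_mem_orthogonal hQ hw l hv).symm

lemma exists_restrictW_eq_of_sgnW_ne_zero (hQ : Q ⊆ Submodule.span ℝ P) {l m' : HStar V}
    (h : sgnW S Q (restrictW P l) m' ≠ 0) :
    ∃ m, restrictW P m = m' ∧ sgnW S Q l m ≠ 0 := by
  obtain ⟨-, -, w, hw, rfl⟩ := sgnW_ne_zero_iff.1 h
  refine ⟨wAct w l, restrictW_wAct hQ hw l, ?_⟩
  rwa [← restrictW_wAct hQ hw, sgnW_restrictW hQ fun v hv =>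
    (wAct_apply_of_mem_orthogonal hQ hw l hv).symm] at h

lemma restrictW_mem_lambdaPSub_iff {I : Finset V} (hI : I ⊆ S.Δ) (hP : PhiI S I ⊆ P)
    {m : HStar V} :
    restrictW P m ∈ LambdaPSub S (PhiI S I) P ↔ m ∈ LambdaP (I : Set V) := by
  constructor
  · intro h α hα
    rw [← (restrictW_spec P m).2 α (hP (mem_phiI hI hα))]
    exact h.2 α ⟨mem_phiI hI hα, S.simple_subset (hI hα)⟩
  · intro h
    refine ⟨(restrictW_spec P m).1, fun α hα => ?_⟩
    rw [(restrictW_spec P m).2 α (hP hα.1)]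
    exact isPosInt_apply_coroot hI h hα.1 hα.2

lemma psiP_restrictW {l : HStar V} (hPΦ : P ⊆ (S.Φ : Set V))
    (hΨ : PsiP S Q (S.Φ : Set V) l ⊆ P) :
    PsiP S Q P (restrictW P l) = PsiP S Q (S.Φ : Set V) l := by
  ext γ
  constructor
  · rintro ⟨⟨hγ, hpos⟩, hγQ, hint⟩
    exact ⟨⟨hPΦ hγ, hpos⟩, hγQ, by rwa [(restrictW_spec P l).2 γ hγ] at hint⟩
  · intro h
    exact ⟨⟨hΨ h, h.1.2⟩, h.2.1, by rw [(restrictW_spec P l).2 γ (hΨ h)]; exact h.2.2⟩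

lemma psiPP_restrictW (hQ : Q ⊆ Submodule.span ℝ P) {l : HStar V} (hPΦ : P ⊆ (S.Φ : Set V))
    (hΨ : PsiP S Q (S.Φ : Set V) l ⊆ P) :
    PsiPP S Q P (restrictW P l) = PsiPP S Q (S.Φ : Set V) l := by
  ext γ
  unfold PsiPP
  rw [psiP_restrictW hPΦ hΨ]
  refine and_congr_right fun hγ => ?_
  rw [← restrictW_sRefl (Submodule.subset_span (hΨ hγ))]
  exact isRegularOn_restrictW_iff hQ

lemma jc_restrictW (hQ : Q ⊆ Submodule.span ℝ P) {l m : HStar V} (hPΦ : P ⊆ (S.Φ : Set V))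
    (hΨ : PsiP S Q (S.Φ : Set V) l ⊆ P) (hperp : Set.EqOn l m (Submodule.span ℝ P)ᗮ) :
    jc S Q P (restrictW P l) (restrictW P m) = jc S Q (S.Φ : Set V) l m := by
  refine finsum_mem_congr (psiPP_restrictW hQ hPΦ hΨ) fun γ hγ => ?_
  have hγP : γ ∈ Submodule.span ℝ P := Submodule.subset_span (hΨ hγ.1)
  rw [← restrictW_sRefl hγP]
  exact sgnW_restrictW hQ fun v hv => (sRefl_apply_of_mem_orthogonal hγP l hv).trans (hperp hv)

end Sign

theorem statement_5_general (S : RootSys V) {I : Finset V} (hI : I ⊆ S.Δ)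
    {lam : HStar V} (hlam : lam ∈ LambdaP (I : Set V)) {P : Set V}
    (hP : integralSet S lam ⊆ P) (hPΦ : P ⊆ (S.Φ : Set V))
    {β : V} (hβ : β ∈ Submodule.span ℝ P) :
    ((∃ mu ∈ LambdaP (I : Set V), sgnW S (PhiI S I) (sRefl β lam) mu ≠ 0) ↔
      (∃ mu' ∈ LambdaPSub S (PhiI S I) P,
        sgnW S (PhiI S I) (sRefl β (restrictW P lam)) mu' ≠ 0)) ∧
    (∀ mu ∈ LambdaP (I : Set V), sgnW S (PhiI S I) (sRefl β lam) mu ≠ 0 →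
      restrictW P mu ∈ LambdaPSub S (PhiI S I) P ∧
      sgnW S (PhiI S I) (sRefl β (restrictW P lam)) (restrictW P mu) ≠ 0 ∧
      jc S (PhiI S I) (S.Φ : Set V) lam mu =
        jc S (PhiI S I) P (restrictW P lam) (restrictW P mu)) := by
  have hIP : PhiI S I ⊆ P := (phiI_subset_integralSet hI hlam).trans hP
  have hQ : PhiI S I ⊆ Submodule.span ℝ P := hIP.trans Submodule.subset_span
  have hΨ : PsiP S (PhiI S I) (S.Φ : Set V) lam ⊆ P := (psiP_subset_integralSet _ lam).trans hP
  rw [← restrictW_sRefl hβ]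
  have hrestrict (mu) (hmu : mu ∈ LambdaP (I : Set V))
      (hs : sgnW S (PhiI S I) (sRefl β lam) mu ≠ 0) :
      restrictW P mu ∈ LambdaPSub S (PhiI S I) P ∧
        sgnW S (PhiI S I) (restrictW P (sRefl β lam)) (restrictW P mu) ≠ 0 :=
    ⟨(restrictW_mem_lambdaPSub_iff hI hIP).2 hmu,
      (sgnW_restrictW hQ (eqOn_orthogonal_of_sgnW_ne_zero hQ hs)).trans_ne hs⟩
  refine ⟨⟨fun ⟨mu, hmu, hs⟩ => ⟨_, hrestrict mu hmu hs⟩, ?_⟩, fun mu hmu hs => ?_⟩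
  · rintro ⟨mu', hmu', hs'⟩
    obtain ⟨mu, rfl, hs⟩ := exists_restrictW_eq_of_sgnW_ne_zero hQ hs'
    exact ⟨mu, (restrictW_mem_lambdaPSub_iff hI hIP).1 hmu', hs⟩
  · have hperp : Set.EqOn lam mu (Submodule.span ℝ P)ᗮ := fun v hv =>
      (sRefl_apply_of_mem_orthogonal hβ lam hv).symm.trans
        (eqOn_orthogonal_of_sgnW_ne_zero hQ hs hv)
    obtain ⟨hmem, hsgn⟩ := hrestrict mu hmu hs
    exact ⟨hmem, hsgn, (jc_restrictW hQ hPΦ hΨ hperp).symm⟩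

/-- Lemma 4.6 (Integral invariance): for `λ ∈ Λ_I⁺` and `β ∈ Ψ_λ⁺`, there is
`μ ∈ Λ_I⁺` with `sgn(s_β λ, μ) ≠ 0` iff there is `μ' ∈ Λ⁺(Φ_I, Φ_{[λ]})` with
`sgn(s_β (λ|_{Φ_{[λ]}}), μ', Φ_I, Φ_{[λ]}) ≠ 0`; and if `sgn(s_β λ, μ) ≠ 0` then
`μ' = μ|_{Φ_{[λ]}}` works and `c(λ, μ) = c(λ|_{Φ_{[λ]}}, μ|_{Φ_{[λ]}}, Φ_I, Φ_{[λ]})`. -/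
theorem statement_5 {V : Type*} [NormedAddCommGroup V] [InnerProductSpace ℝ V]
    [FiniteDimensional ℝ V]
    (S : RootSys V) (I : Finset V) (hI : I ⊆ S.Δ)
    (lam : HStar V) (hlam : lam ∈ LambdaP (I : Set V))
    (β : V) (hβ : β ∈ PsiP S (PhiI S I) (S.Φ : Set V) lam) :
    ((∃ mu ∈ LambdaP (I : Set V), sgnW S (PhiI S I) (sRefl β lam) mu ≠ 0) ↔
      (∃ mu' ∈ LambdaPSub S (PhiI S I) (integralSet S lam),
        sgnW S (PhiI S I) (sRefl β (restrictW (integralSet S lam) lam)) mu' ≠ 0)) ∧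
    (∀ mu ∈ LambdaP (I : Set V), sgnW S (PhiI S I) (sRefl β lam) mu ≠ 0 →
      restrictW (integralSet S lam) mu ∈ LambdaPSub S (PhiI S I) (integralSet S lam) ∧
      sgnW S (PhiI S I) (sRefl β (restrictW (integralSet S lam) lam))
        (restrictW (integralSet S lam) mu) ≠ 0 ∧
      jc S (PhiI S I) (S.Φ : Set V) lam mu =
        jc S (PhiI S I) (integralSet S lam) (restrictW (integralSet S lam) lam)
          (restrictW (integralSet S lam) mu)) :=
  statement_5_general S hI hlam Set.Subset.rfl (Set.sep_subset _ _)
    (Submodule.subset_span (psiP_subset_integralSet _ lam hβ))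

end JantzenGVM
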